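/- arXiv:1902.07937 — 2 statements merged into one kernel-verified Lean document; each statement's English description precedes it below -/
import Mathlib

section
/- In every k-typed Schelling game whose topology is a connected graph with strictly more nodes than agents, and in which every type contains exactly t ≥ 1 strategic agents and exactly ℓ ≥ 0 stubborn agents, every equilibrium assignment has social welfare at least t − 1; consequently, since the maximum social welfare is at most kt, the price of anarchy of any such game is at most kt/(t−1) = k + o(1). -/
/-- A (social) Schelling game: agents `A`, of which `strategic` are the strategic
ones (the rest being stubborn), a social network `net` on the agents (the friends
of an agent are her neighbors in `net`, all other agents are her enemies), a
topology `top` on the set of locations `V`, and the preferred locations `loc`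
of the (stubborn) agents. -/
structure SchellingGame (A V : Type) where
  strategic : Finset A
  net : SimpleGraph A
  top : SimpleGraph V
  loc : A → V

namespace SchellingGame

variable {A V : Type} [Fintype A] [DecidableEq A] [Fintype V] [DecidableEq V]

/-- There are `n ≥ 2` agents, strictly more locations than agents, and the
stubborn agents have pairwise distinct preferred locations. -/
def WellFormed (g : SchellingGame A V) : Prop :=
  2 ≤ Fintype.card A ∧ Fintype.card A < Fintype.card V ∧
    Set.InjOn g.loc ↑(g.strategicᶜ)

/-- An assignment is an injective placement of the agents on the nodes of the
topology which places every stubborn agent at her preferred location. -/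
def IsAssignment (g : SchellingGame A V) (v : A → V) : Prop :=
  Function.Injective v ∧ ∀ i ∉ g.strategic, v i = g.loc i

/-- The number of friends of `i` occupying nodes adjacent to `v i`. -/
noncomputable def fcount (g : SchellingGame A V) (v : A → V) (i : A) : ℕ :=
  Nat.card {j : A // g.net.Adj i j ∧ g.top.Adj (v i) (v j)}

/-- The number of enemies of `i` occupying nodes adjacent to `v i`. -/
noncomputable def ecount (g : SchellingGame A V) (v : A → V) (i : A) : ℕ :=
  Nat.card {j : A // j ≠ i ∧ ¬ g.net.Adj i j ∧ g.top.Adj (v i) (v j)}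

/-- The utility of agent `i` under assignment `v`: `0` if `i` has no adjacent
friends, and otherwise the fraction of friends among her occupied neighbors. -/
noncomputable def util (g : SchellingGame A V) (v : A → V) (i : A) : ℚ :=
  if g.fcount v i = 0 then 0
  else (g.fcount v i : ℚ) / ((g.fcount v i : ℚ) + (g.ecount v i : ℚ))

/-- An assignment is an equilibrium if no strategic agent can strictly increase
her utility by relocating to an unoccupied node. -/
def IsEquilibrium (g : SchellingGame A V) (v : A → V) : Prop :=
  g.IsAssignment v ∧ ∀ i ∈ g.strategic, ∀ z : V, (∀ j : A, v j ≠ z) →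
    g.util (Function.update v i z) i ≤ g.util v i

/-- The social welfare: the total utility of the strategic agents. -/
noncomputable def SW (g : SchellingGame A V) (v : A → V) : ℚ :=
  ∑ i ∈ g.strategic, g.util v i

/-- `g` is a `k`-typed Schelling game with type map `typ`: two distinct agents are
friends iff they have the same type, and every type is nonempty. -/
def IsTypedGame (g : SchellingGame A V) (k : ℕ) (typ : A → Fin k) : Prop :=
  (∀ i j : A, g.net.Adj i j ↔ (i ≠ j ∧ typ i = typ j)) ∧ ∀ c : Fin k, ∃ i : A, typ i = c

end SchellingGame

/-- A star graph: one center node adjacent to all other nodes, and no other edges. -/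
def IsStar {V : Type} (G : SimpleGraph V) : Prop :=
  ∃ c : V, ∀ a b : V, G.Adj a b ↔ (a ≠ b ∧ (a = c ∨ b = c))

/-!
Fix an equilibrium and an unoccupied node `z` adjacent to at least one occupied node; let `N ≠ ∅`
be the set of agents next to `z`. If a strategic agent `i` moves to `z`, all her friends in `N`
are then adjacent to her and at most `#N` agents are, so her utility becomes at least
`#{j ∈ N | j is a friend of i} / #N`, which by equilibrium is at most her current utility. Summing
over the strategic agents and counting the pairs (strategic `i`, friend `j ∈ N`) from the side of
`N` bounds the social welfare below by the average, over `j ∈ N`, of the number of strategic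
friends of `j`. Types enter only in this last quantity, which is at least `t - 1` for every agent.
-/

theorem exists_adj_notMem_of_preconnected {V : Type*} {G : SimpleGraph V} (hG : G.Preconnected)
    {s : Set V} (hs : s.Nonempty) (hs' : s ≠ Set.univ) : ∃ x ∈ s, ∃ y ∉ s, G.Adj x y := by
  obtain ⟨x, hx⟩ := hs
  obtain ⟨y, hy⟩ := (Set.ne_univ_iff_exists_notMem s).mp hs'
  obtain ⟨p⟩ := hG x y
  obtain ⟨d, -, hfst, hsnd⟩ := p.exists_boundary_dart s hx hy
  exact ⟨d.fst, hfst, d.snd, hsnd, d.adj⟩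

namespace SchellingGame

open Finset

variable {A V : Type} (g : SchellingGame A V) (v : A → V)

section Utility

theorem util_eq_div (i : A) :
    g.util v i = g.fcount v i / ((g.fcount v i : ℚ) + g.ecount v i) := by
  unfold util
  split_ifs with h
  · rw [h, Nat.cast_zero, zero_div]
  · rfl

theorem util_le_one (i : A) : g.util v i ≤ 1 := by
  rw [util_eq_div]
  exact div_le_one_of_le₀ (le_add_of_nonneg_right (Nat.cast_nonneg _)) (by positivity)

theorem SW_le_card_strategic : g.SW v ≤ #g.strategic :=
  (sum_le_card_nsmul g.strategic _ 1 fun i _ ↦ g.util_le_one v i).trans_eq (nsmul_one _)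

end Utility

section Counting

variable [Fintype A] [DecidableRel g.top.Adj]

/-- The agents that `v` places on nodes adjacent to the node `z`. Taking the node as an argument
lets the same set describe the neighbors of an agent moving to `z`. -/
def nearbyAgents (z : V) : Finset A := {j | g.top.Adj z (v j)}

variable {g v} in
@[simp]
theorem mem_nearbyAgents {z : V} {j : A} : j ∈ g.nearbyAgents v z ↔ g.top.Adj z (v j) := by
  simp [nearbyAgents]

theorem nearbyAgents_update_self [DecidableEq A] (i : A) (z : V) :
    g.nearbyAgents (Function.update v i z) z = (g.nearbyAgents v z).erase i := by
  ext j
  by_cases h : j = i <;> simp [h]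

variable [DecidableRel g.net.Adj]

theorem fcount_eq_card (i : A) :
    g.fcount v i = #{j ∈ g.nearbyAgents v (v i) | g.net.Adj i j} :=
  Nat.subtype_card _ fun j ↦ by simp [and_comm]

theorem ecount_eq_card (i : A) :
    g.ecount v i = #{j ∈ g.nearbyAgents v (v i) | ¬ g.net.Adj i j} := by
  refine Nat.subtype_card _ fun j ↦ ?_
  have hne : g.top.Adj (v i) (v j) → j ≠ i := by
    rintro hadj rfl
    exact g.top.irrefl hadj
  rw [mem_filter, mem_nearbyAgents]
  tauto

theorem util_eq_card_div_card (i : A) :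
    g.util v i =
      #{j ∈ g.nearbyAgents v (v i) | g.net.Adj i j} / (#(g.nearbyAgents v (v i)) : ℚ) := by
  rw [util_eq_div, ← Nat.cast_add, fcount_eq_card, ecount_eq_card,
    card_filter_add_card_filter_not]

theorem card_div_card_le_util_update [DecidableEq A] (i : A) (z : V) :
    #{j ∈ g.nearbyAgents v z | g.net.Adj i j} / (#(g.nearbyAgents v z) : ℚ) ≤
      g.util (Function.update v i z) i := by
  have hfriends : {j ∈ (g.nearbyAgents v z).erase i | g.net.Adj i j} =
      {j ∈ g.nearbyAgents v z | g.net.Adj i j} := by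
    rw [filter_erase, erase_eq_of_notMem (by simp)]
  rw [util_eq_card_div_card, Function.update_self, nearbyAgents_update_self, hfriends]
  obtain h | h := ((g.nearbyAgents v z).erase i).eq_empty_or_nonempty
  · rw [← hfriends, h, filter_empty, card_empty, Nat.cast_zero, zero_div, zero_div]
  · gcongr
    exact erase_subset i _

end Counting

section Equilibrium

variable {g v} [DecidableEq A] [DecidableRel g.net.Adj]

theorem IsEquilibrium.sum_card_div_card_le_SW [Fintype A] [DecidableRel g.top.Adj]
    (hv : g.IsEquilibrium v) {z : V} (hz : z ∉ Set.range v) :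
    (∑ i ∈ g.strategic, #{j ∈ g.nearbyAgents v z | g.net.Adj i j} : ℚ) / #(g.nearbyAgents v z) ≤
      g.SW v := by
  rw [sum_div]
  exact sum_le_sum fun i hi ↦
    (g.card_div_card_le_util_update v i z).trans (hv.2 i hi z fun j hj ↦ hz ⟨j, hj⟩)

theorem IsEquilibrium.le_SW [Finite A] [Nonempty A] (hconn : g.top.Preconnected) {d : ℕ}
    (hd : ∀ j, d ≤ #{i ∈ g.strategic | g.net.Adj i j}) (hv : g.IsEquilibrium v)
    (hvacant : ¬ v.Surjective) : d ≤ g.SW v := by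
  classical
  have := Fintype.ofFinite A
  obtain ⟨_, ⟨a, rfl⟩, z, hz, hadj⟩ := exists_adj_notMem_of_preconnected hconn
    (Set.range_nonempty v) (mt Set.range_eq_univ.mp hvacant)
  have hpos : 0 < #(g.nearbyAgents v z) := card_pos.mpr ⟨a, mem_nearbyAgents.mpr hadj.symm⟩
  refine le_trans ?_ (hv.sum_card_div_card_le_SW hz)
  rw [le_div_iff₀ (Nat.cast_pos.mpr hpos)]
  norm_cast
  calc d * #(g.nearbyAgents v z)
      ≤ ∑ j ∈ g.nearbyAgents v z, #{i ∈ g.strategic | g.net.Adj i j} := by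
        rw [mul_comm]
        exact card_nsmul_le_sum _ _ _ fun j _ ↦ hd j
    _ = ∑ i ∈ g.strategic, #{j ∈ g.nearbyAgents v z | g.net.Adj i j} :=
        (sum_card_bipartiteAbove_eq_sum_card_bipartiteBelow g.net.Adj).symm

end Equilibrium

section Typed

variable {g} {ι : Type*} {typ : A → ι}

theorem card_strategic_eq_mul [Fintype ι] {t : ℕ}
    (hcount : ∀ c, Nat.card {i // typ i = c ∧ i ∈ g.strategic} = t) :
    #g.strategic = Fintype.card ι * t := by
  classical
  have hfiber (c : ι) : #{i ∈ g.strategic | typ i = c} = t :=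
    (Nat.subtype_card _ fun i ↦ by simp [and_comm]).symm.trans (hcount c)
  simp [card_eq_sum_card_fiberwise (f := typ) (s := g.strategic) (t := univ), hfiber]

theorem card_strategic_sub_one_le_card_friends [DecidableRel g.net.Adj]
    (hnet : ∀ i j, g.net.Adj i j ↔ i ≠ j ∧ typ i = typ j) (j : A) :
    Nat.card {i // typ i = typ j ∧ i ∈ g.strategic} - 1 ≤ #{i ∈ g.strategic | g.net.Adj i j} := by
  classical
  have herase : {i ∈ g.strategic | g.net.Adj i j} = {i ∈ g.strategic | typ i = typ j}.erase j := by
    ext i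
    simp only [mem_filter, mem_erase, hnet]
    tauto
  rw [herase, Nat.subtype_card {i ∈ g.strategic | typ i = typ j} fun i ↦ by simp [and_comm]]
  exact pred_card_le_card_erase

end Typed

end SchellingGame

open Finset in
theorem stmt14_general {A V : Type} [Finite A] [DecidableEq A] [Nonempty A]
    (g : SchellingGame A V) [DecidableRel g.net.Adj] (hconn : g.top.Preconnected) (d : ℕ)
    (hd : ∀ j, d ≤ #{i ∈ g.strategic | g.net.Adj i j}) :
    (∀ v, g.IsEquilibrium v → ¬ v.Surjective → d ≤ g.SW v) ∧ ∀ v, g.SW v ≤ #g.strategic :=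
  ⟨fun _ hv hvacant ↦ hv.le_SW hconn hd hvacant, g.SW_le_card_strategic⟩

/-- in every k-typed Schelling game with a connected topology having
strictly more nodes than agents, in which every type has exactly t ≥ 1 strategic and
exactly ℓ stubborn agents, every equilibrium has social welfare at least t - 1; and
every assignment has social welfare at most kt (so the price of anarchy is at most
kt/(t-1) = k + o(1)). -/
theorem stmt14 (A V : Type) [Fintype A] [DecidableEq A] [Fintype V] [DecidableEq V]
    (g : SchellingGame A V) (hwf : g.WellFormed)
    (k : ℕ) (hk : 2 ≤ k) (typ : A → Fin k) (ht : g.IsTypedGame k typ)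
    (t l : ℕ) (htpos : 1 ≤ t)
    (hstratCount : ∀ c : Fin k, Nat.card {i // typ i = c ∧ i ∈ g.strategic} = t)
    (hstubCount : ∀ c : Fin k, Nat.card {i // typ i = c ∧ i ∉ g.strategic} = l)
    (hconn : g.top.Connected) :
    (∀ v, g.IsEquilibrium v → (t : ℚ) - 1 ≤ g.SW v) ∧
    (∀ v, g.IsAssignment v → g.SW v ≤ (k * t : ℚ)) := by
  classical
  have : Nonempty A := Fintype.card_pos_iff.mp (two_pos.trans_le hwf.1)
  have h := stmt14_general g hconn.preconnected (t - 1) fun j ↦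
    hstratCount (typ j) ▸ SchellingGame.card_strategic_sub_one_le_card_friends ht.1 j
  rw [Nat.cast_pred htpos, SchellingGame.card_strategic_eq_mul hstratCount, Fintype.card_fin,
    Nat.cast_mul] at h
  exact ⟨fun v hv ↦ h.1 v hv fun hsurj ↦ (Fintype.card_le_of_surjective v hsurj).not_gt hwf.2.1,
    fun v _ ↦ h.2 v⟩
end

section
/- Consider the linear-utility variant of a social Schelling game in which, for fixed reals α, β ≥ 0, the utility of agent i under assignment v is α·f_i(v) − β·e_i(v). Define Φ(v) = Σ_{i∈N} (α·f_i(v) − β·e_i(v)). Then whenever a strategic agent i relocates from her node to an unoccupied node, producing assignment v' from assignment v, it holds that Φ(v') − Φ(v) = 2·(u_i(v') − u_i(v)); in particular, Φ strictly increases under every strictly profitable deviation, and consequently every such game admits an equilibrium assignment. -/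
namespace SchellingGame

variable {A V : Type} [Fintype A] [DecidableEq A] [Fintype V] [DecidableEq V]

/-- Linear-utility variant: the utility of agent `i` is `α·f_i(v) − β·e_i(v)`. -/
noncomputable def linUtil (g : SchellingGame A V) (a b : ℝ) (v : A → V) (i : A) : ℝ :=
  a * (g.fcount v i : ℝ) - b * (g.ecount v i : ℝ)

/-- The potential `Φ(v) = Σ_{i ∈ N} (α·f_i(v) − β·e_i(v))`. -/
noncomputable def linPotential (g : SchellingGame A V) (a b : ℝ) (v : A → V) : ℝ :=
  ∑ i : A, g.linUtil a b v i

/-- Equilibrium for the linear-utility variant: no strategic agent can strictly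
increase her (linear) utility by relocating to an unoccupied node. -/
def LinIsEquilibrium (g : SchellingGame A V) (a b : ℝ) (v : A → V) : Prop :=
  g.IsAssignment v ∧ ∀ i ∈ g.strategic, ∀ z : V, (∀ j : A, v j ≠ z) →
    g.linUtil a b (Function.update v i z) i ≤ g.linUtil a b v i

/-- Social welfare in the linear-utility variant. -/
noncomputable def linSW (g : SchellingGame A V) (a b : ℝ) (v : A → V) : ℝ :=
  ∑ i ∈ g.strategic, g.linUtil a b v i

end SchellingGame

/-!
The linear utility of an agent is a sum of pairwise contributions, symmetric because both the social
network and the topology are undirected. A relocation of `i` alters only the contributions involving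
`i`, and `Φ` counts each of these twice: once for `i` and once for the other agent. Hence `Φ` moves
by twice the change in utility of `i`. As `Φ` depends only on which agents are adjacent to each
other, it takes finitely many values, and an assignment maximizing it is an equilibrium.
-/

theorem sum_sum_eq_two_nsmul_sum {ι M : Type*} [Fintype ι] [AddCommMonoid M] {d : ι → ι → M} {i : ι}
    (hsymm : ∀ p, d p i = d i p) (hdiag : d i i = 0)
    (hoff : ∀ p q, p ≠ i → q ≠ i → d p q = 0) :
    ∑ p, ∑ q, d p q = 2 • ∑ q, d i q := by
  classical
  have row_eq : ∀ p ≠ i, ∑ q, d p q = d i p := fun p hp => by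
    rw [Fintype.sum_eq_single i fun q hq => hoff p q hp hq, hsymm]
  calc ∑ p, ∑ q, d p q
      = ∑ q, d i q + ∑ p ∈ Finset.univ.erase i, ∑ q, d p q :=
        (Finset.add_sum_erase _ _ (Finset.mem_univ i)).symm
    _ = ∑ q, d i q + ∑ p ∈ Finset.univ.erase i, d i p := by
        rw [Finset.sum_congr rfl fun p hp => row_eq p (Finset.ne_of_mem_erase hp)]
    _ = 2 • ∑ q, d i q := by
        rw [Finset.sum_erase _ hdiag, two_nsmul]

theorem injective_update_of_forall_ne {α β : Type*} [DecidableEq α] {f : α → β}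
    (hf : Function.Injective f) (a : α) {b : β} (hb : ∀ x, f x ≠ b) :
    Function.Injective (Function.update f a b) := by
  intro x y hxy
  grind [Function.update_apply, hf.eq_iff]

theorem exists_injective_eqOn {α β : Type*} [Fintype α] [Fintype β] {s : Set α} {f : α → β}
    (hcard : Fintype.card α ≤ Fintype.card β) (hf : Set.InjOn f s) :
    ∃ g : α → β, Function.Injective g ∧ Set.EqOn g f s := by
  classical
  obtain ⟨t, himage, -, ht⟩ := Finset.exists_subsuperset_card_eq
    (Finset.subset_univ (s.toFinset.image f))
    (Finset.card_image_le.trans (Finset.card_le_univ _)) hcard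
  have hmaps : s.MapsTo f t := fun x hx =>
    himage (Finset.mem_image_of_mem f (Set.mem_toFinset.2 hx))
  obtain ⟨e, he⟩ := hmaps.exists_equiv_extend_of_card_eq ht.symm hf
  exact ⟨fun x => e x, Subtype.val_injective.comp e.injective, he⟩

namespace SchellingGame

variable {A V : Type}

theorem WellFormed.exists_isAssignment [Fintype A] [DecidableEq A] [Fintype V]
    {g : SchellingGame A V} (hg : g.WellFormed) : ∃ v, g.IsAssignment v := by
  obtain ⟨-, hcard, hloc⟩ := hg
  obtain ⟨v, hv, heq⟩ := exists_injective_eqOn hcard.le hloc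
  exact ⟨v, hv, fun i hi => heq (Finset.mem_coe.2 (Finset.mem_compl.2 hi))⟩

theorem IsAssignment.update [DecidableEq A] {g : SchellingGame A V} {v : A → V} {i : A} {z : V}
    (hv : g.IsAssignment v) (hi : i ∈ g.strategic) (hz : ∀ j, v j ≠ z) :
    g.IsAssignment (Function.update v i z) := by
  refine ⟨injective_update_of_forall_ne hv.1 i hz, fun j hj => ?_⟩
  rw [Function.update_of_ne (ne_of_mem_of_not_mem hi hj).symm]
  exact hv.2 j hj

variable (g : SchellingGame A V) (a b : ℝ)

open Classical in
/-- The contribution of agent `j` to the linear utility of agent `i` under `v`: `a` for an adjacent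
friend, `-b` for an adjacent enemy, `0` otherwise. The case `j = i` needs no exclusion, since the
topology has no loops. -/
noncomputable def linContribution (v : A → V) (i j : A) : ℝ :=
  if g.top.Adj (v i) (v j) then if g.net.Adj i j then a else -b else 0

theorem linContribution_comm (v : A → V) (i j : A) :
    g.linContribution a b v i j = g.linContribution a b v j i := by
  unfold linContribution
  rw [g.top.adj_comm (v i), g.net.adj_comm i]

theorem linContribution_self (v : A → V) (i : A) : g.linContribution a b v i i = 0 :=
  if_neg g.top.irrefl

theorem linContribution_congr {v w : A → V} {i j : A} (hi : w i = v i) (hj : w j = v j) :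
    g.linContribution a b w i j = g.linContribution a b v i j := by
  unfold linContribution
  rw [hi, hj]

variable [Fintype A]

theorem linUtil_eq_sum_linContribution (v : A → V) (i : A) :
    g.linUtil a b v i = ∑ j, g.linContribution a b v i j := by
  classical
  simp only [linUtil, fcount, ecount, Nat.card_eq_fintype_card, Fintype.card_subtype,
    Finset.natCast_card_filter, Finset.mul_sum, ← Finset.sum_sub_distrib]
  refine Finset.sum_congr rfl fun j _ => ?_
  obtain rfl | hji := eq_or_ne j i
  · simp [linContribution_self]
  · by_cases htop : g.top.Adj (v i) (v j) <;> by_cases hnet : g.net.Adj i j <;>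
      simp [linContribution, htop, hnet, hji]

theorem linPotential_update_sub [DecidableEq A] (v : A → V) (i : A) (z : V) :
    g.linPotential a b (Function.update v i z) - g.linPotential a b v =
      2 * (g.linUtil a b (Function.update v i z) i - g.linUtil a b v i) := by
  simp only [linPotential, linUtil_eq_sum_linContribution, ← Finset.sum_sub_distrib]
  rw [← Nat.cast_ofNat (n := 2), ← nsmul_eq_mul]
  refine sum_sum_eq_two_nsmul_sum (fun p => ?symm) ?diag fun p q hp hq => ?off
  case symm => rw [linContribution_comm, g.linContribution_comm a b v]
  case diag => rw [linContribution_self, linContribution_self, sub_zero]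
  case off =>
    exact sub_eq_zero.2 <| g.linContribution_congr a b
      (Function.update_of_ne hp z v) (Function.update_of_ne hq z v)

theorem linPotential_lt_linPotential_update_iff [DecidableEq A] {v : A → V} {i : A} {z : V} :
    g.linPotential a b v < g.linPotential a b (Function.update v i z) ↔
      g.linUtil a b v i < g.linUtil a b (Function.update v i z) i := by
  rw [← sub_pos, linPotential_update_sub, mul_pos_iff_of_pos_left two_pos, sub_pos]

theorem finite_range_linPotential : (Set.range (g.linPotential a b)).Finite := by
  -- `Φ v` is the potential of the game played on `g.top.comap v`, with each agent at her own node.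
  let potential (H : SimpleGraph A) : ℝ :=
    linPotential ⟨g.strategic, g.net, H, id⟩ a b id
  refine (Set.finite_range potential).subset ?_
  rintro _ ⟨v, rfl⟩
  exact ⟨g.top.comap v, rfl⟩

end SchellingGame

theorem stmt18_general (A V : Type) [Fintype A] [DecidableEq A] (g : SchellingGame A V)
    (hg : ∃ v, g.IsAssignment v) (a b : ℝ) :
    (∀ (v : A → V) (i : A) (z : V),
      g.linPotential a b (Function.update v i z) - g.linPotential a b v =
        2 * (g.linUtil a b (Function.update v i z) i - g.linUtil a b v i)) ∧
    (∃ v, g.LinIsEquilibrium a b v) := by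
  refine ⟨g.linPotential_update_sub a b, ?_⟩
  obtain ⟨v, hv, hmax⟩ := Set.Finite.exists_maximalFor' (g.linPotential a b)
    {v | g.IsAssignment v}
    ((g.finite_range_linPotential a b).subset (Set.image_subset_range _ _)) hg
  refine ⟨v, hv, fun i hi z hz => not_lt.1 fun hprofit => ?_⟩
  have hlt := (g.linPotential_lt_linPotential_update_iff a b).2 hprofit
  exact hlt.not_ge (hmax (hv.update hi hz) hlt.le)

/-- in the linear-utility variant, whenever a strategic agent relocates
from her node to an unoccupied node, Φ changes by exactly twice the change of her own
utility; in particular Φ strictly increases under strictly profitable deviations, and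
every such game admits an equilibrium. -/
theorem stmt18 (A V : Type) [Fintype A] [DecidableEq A] [Fintype V] [DecidableEq V]
    (g : SchellingGame A V) (hwf : g.WellFormed)
    (a b : ℝ) (ha : 0 ≤ a) (hb : 0 ≤ b) :
    (∀ (v : A → V), g.IsAssignment v → ∀ i ∈ g.strategic, ∀ z : V, (∀ j : A, v j ≠ z) →
      g.linPotential a b (Function.update v i z) - g.linPotential a b v =
        2 * (g.linUtil a b (Function.update v i z) i - g.linUtil a b v i)) ∧
    (∃ v, g.LinIsEquilibrium a b v) := by
  obtain ⟨hpot, heq⟩ := stmt18_general A V g hwf.exists_isAssignment a b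
  exact ⟨fun v _ i _ z _ => hpot v i z, heq⟩
end
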